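/- arXiv:1912.06897 — 7 statements merged into one kernel-verified Lean document; each statement's English description precedes it below -/
import Mathlib

section
/- Let A be a finite invertible Mealy automaton over X. Then the group G_A is finite if and only if the group G_{C(A)} generated by the circuit part C(A) of A is finite. -/
/-- A Mealy automaton over alphabet `X` with state set `S`:
the transition-output function sends `(s, x)` to `(output letter, next state)`. -/
structure Mealy (S X : Type*) where
  step : S → X → X × S

namespace Mealy

variable {S X : Type*}

/-- The section `s|_v`: the state reached after processing the word `v` from state `s`. -/
def sec (A : Mealy S X) (s : S) : List X → S
  | [] => s
  | x :: v => A.sec (A.step s x).2 v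

/-- The action of a state on finite words (lists of letters, read left to right). -/
def act (A : Mealy S X) (s : S) : List X → List X
  | [] => []
  | x :: v => (A.step s x).1 :: A.act (A.step s x).2 v

/-- A state is trivial if it acts on `X^*` as the identity. -/
def IsTrivialState (A : Mealy S X) (s : S) : Prop := ∀ v : List X, A.act s v = v

/-- An automaton is invertible if every state acts on the letters by a permutation. -/
def Invertible (A : Mealy S X) : Prop :=
  ∀ s : S, Function.Bijective fun x : X => (A.step s x).1

/-- The automaton group `G_A`: the subgroup of permutations of `X^*` generated by
the permutations defined by the states of `A`. -/
def autGroup (A : Mealy S X) : Subgroup (Equiv.Perm (List X)) :=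
  Subgroup.closure { f : Equiv.Perm (List X) | ∃ s : S, ∀ v : List X, f v = A.act s v }

/-- A left-infinite sequence `…x₂x₁` is encoded as `p : ℕ → X` with `p 0 = x₁`, `p 1 = x₂`, ….
It is post-critical if it is the sequence of input labels or of output labels of a
left-infinite directed path in `A` ending at a non-trivial state. -/
def IsPostCritical (A : Mealy S X) (p : ℕ → X) : Prop :=
  ∃ (σ : ℕ → S) (inp out : ℕ → X),
    (∀ n, A.step (σ (n + 1)) (inp n) = (out n, σ n)) ∧
      ¬A.IsTrivialState (σ 0) ∧ (p = inp ∨ p = out)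

/-- The post-critical set of `A`. -/
def PostCriticalSet (A : Mealy S X) : Set (ℕ → X) := { p | A.IsPostCritical p }

/-- An automaton is bounded if its post-critical set is finite. -/
def Bounded (A : Mealy S X) : Prop := A.PostCriticalSet.Finite

/-- The length-`n` suffix (as a finite word, read left to right) of a left-infinite
sequence `…x₂x₁` encoded as `p : ℕ → X`: the word `xₙ…x₂x₁`. -/
def lsuffix (p : ℕ → X) (n : ℕ) : List X := (List.range n).reverse.map p

/-- A finite word is post-critical if it is a suffix of some post-critical sequence. -/
def IsPostCriticalWord (A : Mealy S X) (v : List X) : Prop :=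
  ∃ p : ℕ → X, A.IsPostCritical p ∧ v = lsuffix p v.length

/-- The base relation for `e`-equivalence: `v ≈ u` if some state `s` satisfies
`s|_v` trivial and `s(v) = u`, or `s|_u` trivial and `s(u) = v`. -/
def ERel (A : Mealy S X) (v u : List X) : Prop :=
  ∃ s : S, (A.IsTrivialState (A.sec s v) ∧ A.act s v = u) ∨
    (A.IsTrivialState (A.sec s u) ∧ A.act s u = v)

/-- `e`-equivalence: the equivalence relation generated by `≈`. -/
def EEquiv (A : Mealy S X) : List X → List X → Prop := Relation.EqvGen A.ERel

/-- The `e`-orbit of a word. -/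
def eOrbit (A : Mealy S X) (v : List X) : Set (List X) := { u | A.EEquiv v u }

/-- The orbit of a finite word under the automaton group. -/
def orbit (A : Mealy S X) (v : List X) : Set (List X) := { u | ∃ g ∈ A.autGroup, g v = u }

/-- Reachability by a directed path in the automaton. -/
def Reaches (A : Mealy S X) : S → S → Prop :=
  Relation.ReflTransGen fun a b => ∃ x : X, (A.step a x).2 = b

/-- The states of the circuit part `C(A)`: states reachable by a directed path
from some directed cycle of `A`. -/
def circuitStates (A : Mealy S X) : Set S :=
  { s | ∃ t : S, (∃ x : X, A.Reaches (A.step t x).2 t) ∧ A.Reaches t s }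

/-- The circuit part `C(A)` as a subautomaton. -/
def circuitPart (A : Mealy S X) : Mealy A.circuitStates X where
  step s x :=
    ((A.step s.1 x).1,
      ⟨(A.step s.1 x).2, by
        obtain ⟨t, hc, hr⟩ := s.2
        exact ⟨t, hc, hr.tail ⟨x, rfl⟩⟩⟩)

/-- The subautomaton induced on a subset of states closed under transitions. -/
def subautomaton (A : Mealy S X) (T : Set S)
    (hT : ∀ s ∈ T, ∀ x : X, (A.step s x).2 ∈ T) : Mealy T X where
  step s x := ((A.step s.1 x).1, ⟨(A.step s.1 x).2, hT s.1 s.2 x⟩)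

/-- The extension of a length- and prefix-preserving map on finite words to
right-infinite sequences (letter by letter). -/
def extOmega (f : List X → List X) (w : ℕ → X) : ℕ → X :=
  fun n => (f ((List.range (n + 1)).map w)).getD n (w n)

/-- The orbit of a right-infinite sequence under the automaton group. -/
def orbitOmega (A : Mealy S X) (w : ℕ → X) : Set (ℕ → X) :=
  { w' | ∃ g ∈ A.autGroup, w' = extOmega (⇑(g : Equiv.Perm (List X))) w }

/-- The group `G_A` is level-transitive if it acts transitively on each level `X^n`. -/
def LevelTransitive (A : Mealy S X) : Prop :=
  ∀ v u : List X, v.length = u.length → ∃ g ∈ A.autGroup, g v = u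

end Mealy

/-- The run of a deterministic finite-state machine on a right-infinite input:
`dfaRun δ q₀ w n` is the state after reading the first `n` letters. -/
def dfaRun {Q X : Type*} (δ : Q → X → Q) (q₀ : Q) (w : ℕ → X) : ℕ → Q
  | 0 => q₀
  | n + 1 => δ (dfaRun δ q₀ w n) (w n)

/-- A concrete encoding of an invertible Mealy automaton (with state set `Fin n`
over alphabet `Fin k`) as a natural number. -/
def encodeAut (n k : ℕ) (step : Fin n → Fin k → Fin k × Fin n) : ℕ :=
  Nat.pair n (Nat.pair k (Encodable.encode
    ((List.finRange n).flatMap fun s =>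
      (List.finRange k).map fun x =>
        Nat.pair ((step s x).1 : ℕ) ((step s x).2 : ℕ))))

namespace Mealy

variable {S X : Type*}

theorem aux_act_append (A : Mealy S X) (s : S) (v w : List X) :
    A.act s (v ++ w) = A.act s v ++ A.act (A.sec s v) w := by
  induction v generalizing s with
  | nil => rfl
  | cons x v ih => simp [act, sec, ih]

theorem aux_sec_append (A : Mealy S X) (s : S) (v w : List X) :
    A.sec s (v ++ w) = A.sec (A.sec s v) w := by
  induction v generalizing s with
  | nil => rfl
  | cons x v ih => simp [sec, ih]

theorem aux_act_length (A : Mealy S X) (s : S) (v : List X) :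
    (A.act s v).length = v.length := by
  induction v generalizing s with
  | nil => rfl
  | cons x v ih => simp [act, ih]

theorem aux_act_bij (A : Mealy S X) (hInv : A.Invertible) (s : S) :
    Function.Bijective (A.act s) := by
  constructor
  · intro v
    induction v generalizing s with
    | nil =>
      intro w h
      cases w with
      | nil => rfl
      | cons y w => simp [act] at h
    | cons x v ih =>
      intro w h
      cases w with
      | nil => simp [act] at h
      | cons y w =>
        simp only [act, List.cons.injEq] at h
        obtain ⟨h1, h2⟩ := h
        obtain rfl : x = y := (hInv s).1 h1
        rw [ih _ h2]
  · intro v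
    induction v generalizing s with
    | nil => exact ⟨[], rfl⟩
    | cons x v ih =>
      obtain ⟨y, hy⟩ := (hInv s).2 x
      obtain ⟨w, hw⟩ := ih (A.step s y).2
      refine ⟨y :: w, ?_⟩
      simp only at hy
      simp [act, hy, hw]

theorem aux_reaches_sec (A : Mealy S X) (s : S) (v : List X) : A.Reaches s (A.sec s v) := by
  induction v generalizing s with
  | nil => exact Relation.ReflTransGen.refl
  | cons x v ih => exact Relation.ReflTransGen.head ⟨x, rfl⟩ (ih _)

theorem aux_circuit_act (A : Mealy S X) (s : A.circuitStates) (v : List X) :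
    A.circuitPart.act s v = A.act s.1 v := by
  induction v generalizing s with
  | nil => rfl
  | cons x v ih => simp only [act]; rw [ih]; rfl

theorem aux_sec_mem [Fintype S] (A : Mealy S X) (s : S) (v : List X)
    (hv : v.length = Fintype.card S) : A.sec s v ∈ A.circuitStates := by
  obtain ⟨i, j, hne, hij⟩ := Fintype.exists_ne_map_eq_of_card_lt
    (fun i : Fin (Fintype.card S + 1) => A.sec s (v.take i)) (by simp)
  have key : ∀ i j : ℕ, i < j → j ≤ v.length → A.sec s (v.take i) = A.sec s (v.take j) →
      A.sec s v ∈ A.circuitStates := by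
    intro i j hlt hj h
    have hi : i < v.length := by omega
    refine ⟨A.sec s (v.take i), ⟨v[i], ?_⟩, ?_⟩
    · have e : v.take j = v.take i ++ v[i] :: ((v.take j).drop (i + 1)) := by
        conv_lhs => rw [← List.take_append_drop i (v.take j)]
        rw [List.take_take, min_eq_left hlt.le,
          List.drop_eq_getElem_cons (by simp; omega)]
        simp
      have := A.aux_reaches_sec (A.step (A.sec s (v.take i)) v[i]).2 ((v.take j).drop (i + 1))
      have e2 : A.sec (A.step (A.sec s (v.take i)) v[i]).2 ((v.take j).drop (i + 1))
          = A.sec s (v.take i) := by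
        conv_rhs => rw [h, e, aux_sec_append]
        rfl
      rwa [e2] at this
    · conv => arg 3; rw [← List.take_append_drop i v, aux_sec_append]
      exact A.aux_reaches_sec _ _
  rcases lt_or_gt_of_ne (fun h => hne (Fin.ext h) : (i : ℕ) ≠ j) with h | h
  · exact key i j h (by omega) hij
  · exact key j i h (by omega) hij.symm

/-- Length-preserving permutations all of whose sections at level `n` lie in `H`. -/
def auxLevel (H : Subgroup (Equiv.Perm (List X))) (n : ℕ) : Subgroup (Equiv.Perm (List X)) where
  carrier := { g | (∀ v, (g v).length = v.length) ∧
    ∀ v, v.length = n → ∃ h ∈ H, ∀ w, g (v ++ w) = g v ++ h w }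
  one_mem' := ⟨fun _ => rfl, fun _ _ => ⟨1, H.one_mem, fun _ => rfl⟩⟩
  mul_mem' := by
    rintro a b ⟨ha, ha'⟩ ⟨hb, hb'⟩
    refine ⟨fun v => by simp [ha, hb], fun v hv => ?_⟩
    obtain ⟨h, hh, e⟩ := hb' v hv
    obtain ⟨k, hk, e'⟩ := ha' (b v) (by rw [hb, hv])
    exact ⟨k * h, H.mul_mem hk hh, fun w => by simp [e, e']⟩
  inv_mem' := by
    rintro a ⟨ha, ha'⟩
    have hl : ∀ v, (a⁻¹ v).length = v.length := fun v => by
      rw [← ha (a⁻¹ v)]; simp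
    refine ⟨hl, fun v hv => ?_⟩
    obtain ⟨h, hh, e⟩ := ha' (a⁻¹ v) (by rw [hl, hv])
    refine ⟨h⁻¹, H.inv_mem hh, fun w => ?_⟩
    apply a.injective
    rw [e]
    simp

theorem aux_level_finite [Finite X] (H : Subgroup (Equiv.Perm (List X))) [Finite H] (n : ℕ) :
    Finite (auxLevel H n) := by
  have f1 : Finite {l : List X // l.length ≤ n} := (List.finite_length_le X n).to_subtype
  have f2 : Finite {l : List X // l.length = n} := (List.finite_length_eq X n).to_subtype
  have hs : ∀ (g : auxLevel H n) (v : {l : List X // l.length = n}),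
      ∃ h : H, ∀ w, g.1 (v.1 ++ w) = g.1 v.1 ++ h.1 w := by
    intro g v
    obtain ⟨h, hh, e⟩ := g.2.2 v.1 v.2
    exact ⟨⟨h, hh⟩, e⟩
  choose c hc using hs
  let F : auxLevel H n → ({l : List X // l.length ≤ n} → {l : List X // l.length ≤ n}) ×
      ({l : List X // l.length = n} → H) :=
    fun g => (fun v => ⟨g.1 v.1, by rw [g.2.1]; exact v.2⟩, c g)
  refine Finite.of_injective F ?_
  intro g g' hg
  have h1 : ∀ v : List X, v.length ≤ n → g.1 v = g'.1 v := fun v hv =>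
    congrArg Subtype.val (congrFun (congrArg Prod.fst hg) ⟨v, hv⟩)
  have h2 : c g = c g' := congrArg Prod.snd hg
  apply Subtype.ext
  ext1 v
  by_cases hv : v.length ≤ n
  · exact h1 v hv
  · have hl : (v.take n).length = n := by simp; omega
    have a := hc g ⟨_, hl⟩ (v.drop n)
    have b := hc g' ⟨_, hl⟩ (v.drop n)
    simp only [List.take_append_drop] at a b
    rw [a, b, h2, h1 _ hl.le]

end Mealy

/-- For a finite invertible automaton `A`, the group `G_A` is finite
iff the group generated by the circuit part `C(A)` is finite. -/
theorem finite_iff_finite_circuitPart {S X : Type*} [Fintype S] [Fintype X]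
    (hX : 2 ≤ Fintype.card X) (A : Mealy S X) (hInv : A.Invertible) :
    Finite A.autGroup ↔ Finite A.circuitPart.autGroup := by
  constructor
  · intro hfin
    have hle : A.circuitPart.autGroup ≤ A.autGroup := by
      apply Subgroup.closure_mono
      rintro f ⟨s, hs⟩
      exact ⟨s.1, fun v => by rw [hs, Mealy.aux_circuit_act]⟩
    exact Finite.of_injective _ (Subgroup.inclusion_injective hle)
  · intro hfin
    have hle : A.autGroup ≤ Mealy.auxLevel A.circuitPart.autGroup (Fintype.card S) := by
      refine (Subgroup.closure_le _).2 ?_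
      rintro f ⟨s, hs⟩
      refine ⟨fun v => by rw [hs, Mealy.aux_act_length], fun v hv => ?_⟩
      refine ⟨Equiv.ofBijective _ (A.aux_act_bij hInv (A.sec s v)),
        Subgroup.subset_closure ⟨⟨A.sec s v, A.aux_sec_mem s v hv⟩, fun w => ?_⟩, fun w => ?_⟩
      · rw [Mealy.aux_circuit_act]; rfl
      · rw [hs, hs, Mealy.aux_act_append]; rfl
    have := Mealy.aux_level_finite A.circuitPart.autGroup (Fintype.card S)
    exact Finite.of_injective _ (Subgroup.inclusion_injective hle)
end

section
/- Let G be a finitely generated group acting faithfully on a set Ω, and suppose there is a constant C such that every G-orbit in Ω has at most C elements. Then G is finite. -/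
/-- A finitely generated group acting faithfully with uniformly bounded
orbits is finite. -/
theorem finite_of_uniformly_bounded_orbits {G Ω : Type*} [Group G] [MulAction G Ω]
    [FaithfulSMul G Ω] (hfg : Group.FG G) (C : ℕ)
    (hC : ∀ ω : Ω, (MulAction.orbit G ω).Finite ∧ (MulAction.orbit G ω).ncard ≤ C) :
    Finite G := by
  classical
  obtain ⟨S, hS, hfin⟩ := Group.fg_iff.mp hfg
  have : Finite S := hfin
  have hHom : Finite (G →* Equiv.Perm (Fin C)) := by
    refine Finite.of_injective
      (fun (f : G →* Equiv.Perm (Fin C)) (s : S) => f s) ?_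
    intro f f' h
    exact MonoidHom.eq_of_eqOn_dense hS (fun x hx => congrFun h ⟨x, hx⟩)
  refine Finite.of_injective
    (fun (g : G) (f : G →* Equiv.Perm (Fin C)) => f g) ?_
  intro g h hgh
  refine FaithfulSMul.eq_of_smul_eq_smul (α := Ω) fun ω => ?_
  obtain ⟨hf, hc⟩ := hC ω
  have : Fintype (MulAction.orbit G ω) := hf.fintype
  have hcard : Fintype.card (MulAction.orbit G ω) ≤ Fintype.card (Fin C) := by
    rw [Fintype.card_fin, ← Nat.card_eq_fintype_card]
    exact hc
  obtain ⟨e⟩ := Function.Embedding.nonempty_of_card_le hcard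
  have h1 := congrFun hgh ((Equiv.Perm.viaEmbeddingHom e).comp
    (MulAction.toPermHom G (MulAction.orbit G ω)))
  have h2 := Equiv.Perm.viaEmbeddingHom_injective e h1
  have h3 := congrArg Subtype.val
    (Equiv.congr_fun h2 ⟨ω, MulAction.mem_orbit_self ω⟩)
  exact h3
end

section
/- Let A be a finite invertible Mealy automaton over X. The group G_A is finite if and only if there is a constant C such that every G_A-orbit O(v) of a finite word v ∈ X^* has at most C elements (i.e., the orbits of the action of G_A on X^* are uniformly bounded). -/
/-- `G_A` is finite iff the orbits of its action on `X^*` are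
uniformly bounded. -/
theorem finite_iff_orbits_uniformly_bounded {S X : Type*} [Fintype S] [Fintype X]
    (hX : 2 ≤ Fintype.card X) (A : Mealy S X) (hInv : A.Invertible) :
    Finite A.autGroup ↔
      ∃ C : ℕ, ∀ v : List X, (A.orbit v).Finite ∧ (A.orbit v).ncard ≤ C := by
  classical
  constructor
  · intro hfin
    refine ⟨Nat.card A.autGroup, fun v => ?_⟩
    have hr : A.orbit v = Set.range (fun g : A.autGroup => (g : Equiv.Perm (List X)) v) := by
      ext u
      constructor
      · rintro ⟨g, hg, rfl⟩
        exact ⟨⟨g, hg⟩, rfl⟩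
      · rintro ⟨g, rfl⟩
        exact ⟨g.1, g.2, rfl⟩
    rw [hr]
    refine ⟨Set.finite_range _, ?_⟩
    rw [← Nat.card_coe_set_eq]
    exact Finite.card_range_le _
  · rintro ⟨C, hC⟩
    -- the generating set is finite
    let T : Set (Equiv.Perm (List X)) := { f | ∃ s : S, ∀ v : List X, f v = A.act s v }
    have hT : Finite T := by
      choose st hst using fun f : T => f.2
      refine Finite.of_injective st fun f g h => ?_
      apply Subtype.ext
      ext1 v
      rw [hst f v, hst g v, h]
    -- so there are finitely many homomorphisms to the symmetric group on `C` points
    have hHom : Finite (A.autGroup →* Equiv.Perm (Fin C)) := by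
      refine Finite.of_injective
        (fun (φ : A.autGroup →* Equiv.Perm (Fin C)) (t : T) =>
          φ ⟨t.1, Subgroup.subset_closure t.2⟩) fun φ ψ h => ?_
      ext1 ⟨g, hg⟩
      induction hg using Subgroup.closure_induction with
      | mem x hx => exact congrFun h ⟨x, hx⟩
      | one => exact (map_one φ).trans (map_one ψ).symm
      | mul x y hx hy h1 h2 =>
        have e : (⟨x * y, mul_mem hx hy⟩ : A.autGroup) = ⟨x, hx⟩ * ⟨y, hy⟩ := rfl
        exact (congrArg φ e).trans ((map_mul φ _ _).trans
          ((congrArg₂ _ h1 h2).trans (map_mul ψ _ _).symm))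
      | inv x hx h1 =>
        exact (map_inv φ ⟨x, hx⟩).trans ((congrArg _ h1).trans (map_inv ψ ⟨x, hx⟩).symm)
    -- homomorphisms to the symmetric group on `C` points separate elements
    refine Finite.of_injective
      (fun (g : A.autGroup) (φ : A.autGroup →* Equiv.Perm (Fin C)) => φ g) fun g h hgh => ?_
    apply Subtype.ext
    ext1 v
    have ho : MulAction.orbit A.autGroup v = A.orbit v := by
      ext u
      constructor
      · rintro ⟨g, rfl⟩
        exact ⟨g.1, g.2, rfl⟩
      · rintro ⟨g, hg, rfl⟩
        exact ⟨⟨g, hg⟩, rfl⟩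
    obtain ⟨hf, hc⟩ := hC v
    rw [← ho] at hf hc
    have : Fintype (MulAction.orbit A.autGroup v) := hf.fintype
    have hc' : Fintype.card (MulAction.orbit A.autGroup v) ≤ Fintype.card (Fin C) := by
      rw [← Nat.card_eq_fintype_card, Nat.card_coe_set_eq, Fintype.card_fin]
      exact hc
    obtain ⟨e⟩ := Function.Embedding.nonempty_of_card_le hc'
    have h1 := congrFun hgh ((Equiv.Perm.viaEmbeddingHom e).comp
      (MulAction.toPermHom A.autGroup (MulAction.orbit A.autGroup v)))
    have h2 := Equiv.Perm.viaEmbeddingHom_injective e h1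
    have h3 := congrArg (fun p => p ⟨v, MulAction.mem_orbit_self v⟩) h2
    exact congrArg Subtype.val h3
end

section
/- Let A be a Mealy automaton over X, let s be a state of A that is reachable by a directed path from some directed cycle of A, and let v be a finite word such that the section s|_v is a non-trivial state. Then v is a post-critical word. -/
namespace Mealy

theorem exists_pred_circuit {S X : Type*} (A : Mealy S X) (s : S) (hs : s ∈ A.circuitStates) :
    ∃ s' ∈ A.circuitStates, ∃ x : X, (A.step s' x).2 = s := by
  obtain ⟨t, ⟨x, hx⟩, hr⟩ := hs
  rcases Relation.ReflTransGen.cases_tail hr with h | ⟨b, hb, y, hy⟩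
  · subst h
    rcases Relation.ReflTransGen.cases_tail hx with h | ⟨b, hb, y, hy⟩
    · exact ⟨s, ⟨s, ⟨x, hx⟩, Relation.ReflTransGen.refl⟩, x, h.symm⟩
    · exact ⟨b, ⟨s, ⟨x, hx⟩, Relation.ReflTransGen.head ⟨x, rfl⟩ hb⟩, y, hy⟩
  · exact ⟨b, ⟨t, ⟨x, hx⟩, hb⟩, y, hy⟩

theorem exists_left_path {S X : Type*} (A : Mealy S X) (s : S) (hs : s ∈ A.circuitStates) :
    ∃ (σ : ℕ → S) (inp : ℕ → X), (∀ n, (A.step (σ (n + 1)) (inp n)).2 = σ n) ∧ σ 0 = s := by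
  choose f hf g hg using A.exists_pred_circuit
  let τ : ℕ → A.circuitStates := fun n => Nat.rec ⟨s, hs⟩ (fun _ t => ⟨f t.1 t.2, hf t.1 t.2⟩) n
  exact ⟨fun n => (τ n).1, fun n => g (τ n).1 (τ n).2, fun n => hg (τ n).1 (τ n).2, rfl⟩

theorem lsuffix_succ {X : Type*} (p : ℕ → X) (n : ℕ) :
    lsuffix p (n + 1) = lsuffix (fun k => p (k + 1)) n ++ [p 0] := by
  simp [lsuffix, List.range_succ_eq_map, Function.comp_def]

theorem extend_left_path {S X : Type*} (A : Mealy S X) (v : List X) :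
    ∀ (u : List X) (σ : ℕ → S) (inp : ℕ → X),
      (∀ n, (A.step (σ (n + 1)) (inp n)).2 = σ n) → u = lsuffix inp u.length →
      ∃ (σ' : ℕ → S) (inp' : ℕ → X), (∀ n, (A.step (σ' (n + 1)) (inp' n)).2 = σ' n) ∧
        σ' 0 = A.sec (σ 0) v ∧ u ++ v = lsuffix inp' (u ++ v).length := by
  induction v with
  | nil =>
    intro u σ inp h hu
    exact ⟨σ, inp, h, rfl, by simpa using hu⟩
  | cons x v ih =>
    intro u σ inp h hu
    obtain ⟨σ', inp', h1, h2, h3⟩ := ih (u ++ [x])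
      (fun n => Nat.casesOn n (A.step (σ 0) x).2 σ) (fun n => Nat.casesOn n x inp)
      (by rintro (_ | n)
          · rfl
          · exact h n)
      (by rw [List.length_append, List.length_singleton, lsuffix_succ]
          exact congrArg (· ++ [x]) hu)
    refine ⟨σ', inp', h1, h2, ?_⟩
    simpa using h3

end Mealy

/-- If a state `s` is reachable from a directed cycle and `s|_v` is a
non-trivial state, then `v` is a post-critical word. -/
theorem postCriticalWord_of_section_nontrivial {S X : Type*} [Fintype S] [Fintype X]
    (hX : 2 ≤ Fintype.card X) (A : Mealy S X) (s : S) (hs : s ∈ A.circuitStates)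
    (v : List X) (h : ¬A.IsTrivialState (A.sec s v)) :
    A.IsPostCriticalWord v := by
  obtain ⟨σ, inp, h1, h2⟩ := A.exists_left_path s hs
  obtain ⟨σ', inp', h3, h4, h5⟩ := A.extend_left_path v [] σ inp h1 rfl
  refine ⟨inp', ⟨σ', inp', fun n => (A.step (σ' (n + 1)) (inp' n)).1, fun n => ?_, ?_, Or.inl rfl⟩, h5⟩
  · exact Prod.ext rfl (h3 n)
  · rw [h4, h2]
    exact h
end

section
/- Let A be a bounded invertible Mealy automaton over X with A = C(A) and nonempty post-critical set 𝒫. For p ∈ 𝒫 and n ≥ 0 let p_n denote the length-n suffix of p. Then: (a) for all p, q ∈ 𝒫 and all n ≥ 0, if p_{n+1} and q_{n+1} are e-equivalent, then p_n and q_n are e-equivalent (the induced partitions Π_n of 𝒫 form a sequence of refinements); (b) consequently, the sequence of equivalence relations ~_n on 𝒫 given by p ~_n q iff p_n and q_n are e-equivalent eventually stabilizes, and at most |𝒫| distinct relations occur among the ~_n. -/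
theorem Mealy.eequiv_tail_of_erel {S X : Type*} (A : Mealy S X) {v u : List X}
    (h : A.ERel v u) : A.EEquiv v.tail u.tail := by
  have key : ∀ (s : S) (v u : List X), A.IsTrivialState (A.sec s v) → A.act s v = u →
      A.EEquiv v.tail u.tail := by
    intro s v u h1 h2
    subst h2
    cases v with
    | nil => exact Relation.EqvGen.refl _
    | cons x v => exact Relation.EqvGen.rel _ _ ⟨(A.step s x).2, Or.inl ⟨h1, rfl⟩⟩
  obtain ⟨s, h | h⟩ := h
  · exact key s v u h.1 h.2
  · exact Relation.EqvGen.symm _ _ (key s u v h.1 h.2)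

theorem Mealy.eequiv_tail {S X : Type*} (A : Mealy S X) {v u : List X}
    (h : A.EEquiv v u) : A.EEquiv v.tail u.tail := by
  induction h with
  | rel _ _ h => exact A.eequiv_tail_of_erel h
  | refl _ => exact Relation.EqvGen.refl _
  | symm _ _ _ ih => exact Relation.EqvGen.symm _ _ ih
  | trans _ _ _ _ _ ih1 ih2 => exact Relation.EqvGen.trans _ _ _ ih1 ih2

theorem Mealy.lsuffix_tail {X : Type*} (p : ℕ → X) (n : ℕ) :
    (Mealy.lsuffix p (n + 1)).tail = Mealy.lsuffix p n := by
  simp [Mealy.lsuffix, List.range_succ]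

/-- A finer equivalence relation with no more classes is equal to the coarser one. -/
theorem setoid_eq_of_card_le {P : Type*} [Finite P] {s t : Setoid P} (hst : s ≤ t)
    (hc : Nat.card (Quotient s) ≤ Nat.card (Quotient t)) : s = t := by
  refine le_antisymm hst ?_
  have hsurj : Function.Surjective (Quotient.map' (s₁ := s) (s₂ := t) id (fun _ _ h => hst h)) := by
    rintro ⟨a⟩
    exact ⟨Quotient.mk s a, rfl⟩
  have hbij := (Nat.bijective_iff_surjective_and_card _).2
    ⟨hsurj, le_antisymm hc (Nat.card_le_card_of_surjective _ hsurj)⟩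
  intro a b hab
  have : Quotient.mk s a = Quotient.mk s b := hbij.1 (Quotient.sound (s := t) hab)
  exact Quotient.exact this

/-- The equivalence relation on the post-critical set induced by level `n`. -/
def Mealy.levelSetoid {S X : Type*} (A : Mealy S X) (n : ℕ) : Setoid A.PostCriticalSet where
  r p q := A.EEquiv (Mealy.lsuffix p.1 n) (Mealy.lsuffix q.1 n)
  iseqv := ⟨fun _ => Relation.EqvGen.refl _, fun h => Relation.EqvGen.symm _ _ h,
    fun h1 h2 => Relation.EqvGen.trans _ _ _ h1 h2⟩

/-- (a) the partitions of the post-critical set induced by the `e`-orbits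
form a sequence of refinements; (b) the induced sequence of equivalence relations
eventually stabilizes, and at most `|𝒫|` distinct relations occur. -/
theorem partitions_refine_and_stabilize {S X : Type*} [Fintype S] [Fintype X]
    (hX : 2 ≤ Fintype.card X) (A : Mealy S X) (hInv : A.Invertible)
    (hBdd : A.Bounded) (hCA : ∀ s : S, s ∈ A.circuitStates)
    (hP : A.PostCriticalSet.Nonempty) :
    (∀ p ∈ A.PostCriticalSet, ∀ q ∈ A.PostCriticalSet, ∀ n : ℕ,
        A.EEquiv (Mealy.lsuffix p (n + 1)) (Mealy.lsuffix q (n + 1)) →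
          A.EEquiv (Mealy.lsuffix p n) (Mealy.lsuffix q n)) ∧
    (∃ N : ℕ, ∀ n : ℕ, N ≤ n →
        (fun p q : A.PostCriticalSet =>
            A.EEquiv (Mealy.lsuffix p.1 n) (Mealy.lsuffix q.1 n)) =
          fun p q : A.PostCriticalSet =>
            A.EEquiv (Mealy.lsuffix p.1 N) (Mealy.lsuffix q.1 N)) ∧
    { r : A.PostCriticalSet → A.PostCriticalSet → Prop |
        ∃ n : ℕ, r = fun p q =>
          A.EEquiv (Mealy.lsuffix p.1 n) (Mealy.lsuffix q.1 n) }.ncard ≤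
      A.PostCriticalSet.ncard := by
  have ha : ∀ p q : ℕ → X, ∀ n : ℕ,
      A.EEquiv (Mealy.lsuffix p (n + 1)) (Mealy.lsuffix q (n + 1)) →
        A.EEquiv (Mealy.lsuffix p n) (Mealy.lsuffix q n) := by
    intro p q n h
    have h2 := A.eequiv_tail h
    rwa [Mealy.lsuffix_tail, Mealy.lsuffix_tail] at h2
  have hfin : Finite A.PostCriticalSet := hBdd.to_subtype
  have hne : Nonempty A.PostCriticalSet := hP.to_subtype
  have hanti : Antitone A.levelSetoid :=
    antitone_nat_of_succ_le fun n p q h => ha p.1 q.1 n h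
  have heq : ∀ m n, Nat.card (Quotient (A.levelSetoid m)) = Nat.card (Quotient (A.levelSetoid n)) →
      A.levelSetoid m = A.levelSetoid n := by
    intro m n h
    rcases le_total m n with hmn | hmn
    · exact (setoid_eq_of_card_le (hanti hmn) h.ge).symm
    · exact setoid_eq_of_card_le (hanti hmn) h.le
  refine ⟨fun p _ q _ => ha p q, ?_, ?_⟩
  · have hfs : Finite (Setoid A.PostCriticalSet) :=
      Finite.of_injective (fun s : Setoid A.PostCriticalSet => s.r) fun s t h =>
        Setoid.ext fun a b => iff_of_eq (congrFun (congrFun h a) b)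
    obtain ⟨N, hN⟩ := WellFoundedGT.monotone_chain_condition
      (⟨fun n => OrderDual.toDual (A.levelSetoid n), fun _ _ h => hanti h⟩ :
        ℕ →o (Setoid A.PostCriticalSet)ᵒᵈ)
    refine ⟨N, fun n hn => ?_⟩
    have h : A.levelSetoid N = A.levelSetoid n := hN n hn
    exact (congrArg (fun s : Setoid A.PostCriticalSet => s.r) h).symm
  · have hset : { r : A.PostCriticalSet → A.PostCriticalSet → Prop |
        ∃ n : ℕ, r = fun p q =>
          A.EEquiv (Mealy.lsuffix p.1 n) (Mealy.lsuffix q.1 n) } =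
        Set.image (fun s : Setoid A.PostCriticalSet => s.r) (Set.range A.levelSetoid) := by
      ext r
      constructor
      · rintro ⟨n, rfl⟩
        exact ⟨_, ⟨n, rfl⟩, rfl⟩
      · rintro ⟨_, ⟨n, rfl⟩, rfl⟩
        exact ⟨n, rfl⟩
    have hinj : Function.Injective (fun s : Setoid A.PostCriticalSet => s.r) := fun s t h =>
      Setoid.ext fun a b => iff_of_eq (congrFun (congrFun h a) b)
    rw [hset, Set.ncard_image_of_injective _ hinj]
    have hle := Set.ncard_le_ncard_of_injOn
      (s := Set.range A.levelSetoid) (t := Set.Icc 1 (Nat.card A.PostCriticalSet))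
      (fun s => Nat.card (Quotient s))
      (by
        rintro _ ⟨n, rfl⟩
        have : Nonempty (Quotient (A.levelSetoid n)) := hne.map (Quotient.mk _)
        exact ⟨Nat.card_pos, Nat.card_le_card_of_surjective _ Quotient.mk_surjective⟩)
      (by
        rintro _ ⟨m, rfl⟩ _ ⟨n, rfl⟩ h
        exact heq m n h)
      (Set.finite_Icc _ _)
    refine hle.trans ?_
    rw [← Nat.card_coe_set_eq (Set.Icc _ _), ← Nat.card_coe_set_eq A.PostCriticalSet]
    simp
end

section
/- Let A be a bounded Mealy automaton over X (i.e., its post-critical set 𝒫 is finite). Then every post-critical sequence …x₃x₂x₁ ∈ 𝒫 is eventually periodic: there exist k ≥ 0 and m ≥ 1 such that x_{n+m} = x_n for all n > k. -/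
/-- All transitions out of a trivial state lead to trivial states. -/
theorem Mealy.IsTrivialState.step {S X : Type*} {A : Mealy S X} {s : S}
    (h : A.IsTrivialState s) (x : X) : A.IsTrivialState (A.step s x).2 := by
  intro v
  have := h (x :: v)
  simp only [Mealy.act, List.cons.injEq] at this
  exact this.2

/-- The post-critical set is invariant under the shift. -/
theorem Mealy.IsPostCritical.shift {S X : Type*} {A : Mealy S X} {p : ℕ → X}
    (h : A.IsPostCritical p) : A.IsPostCritical (fun n => p (n + 1)) := by
  obtain ⟨σ, inp, out, hstep, hnt, hp⟩ := h
  refine ⟨fun n => σ (n + 1), fun n => inp (n + 1), fun n => out (n + 1),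
    fun n => hstep (n + 1), ?_, ?_⟩
  · intro ht
    apply hnt
    have h1 := Mealy.IsTrivialState.step ht (inp 0)
    simpa [hstep 0] using h1
  · rcases hp with rfl | rfl
    · exact Or.inl rfl
    · exact Or.inr rfl

/-- Every post-critical sequence of a bounded automaton is eventually
periodic. (Here `p j` encodes the letter `x_{j+1}` of the sequence `…x₃x₂x₁`.) -/
theorem postCritical_eventually_periodic {S X : Type*} [Fintype S] [Fintype X]
    (hX : 2 ≤ Fintype.card X) (A : Mealy S X) (hBdd : A.Bounded) :
    ∀ p ∈ A.PostCriticalSet, ∃ k m : ℕ, 1 ≤ m ∧ ∀ n : ℕ, k ≤ n → p (n + m) = p n := by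
  intro p hp
  have hmem : ∀ i : ℕ, (fun n => p (n + i)) ∈ A.PostCriticalSet := by
    intro i
    induction i with
    | zero => exact hp
    | succ i ih =>
      have h := Mealy.IsPostCritical.shift ih
      have e : (fun n => p (n + (i + 1))) = fun n => p (n + 1 + i) := by
        funext n
        congr 1
        omega
      rw [e]
      exact h
  obtain ⟨i, -, j, -, hne, heq⟩ := Set.infinite_univ.exists_ne_map_eq_of_mapsTo
    (f := fun i : ℕ => fun n => p (n + i)) (fun i _ => hmem i) hBdd
  have key : ∀ i j : ℕ, i < j → (fun n => p (n + i)) = (fun n => p (n + j)) →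
      ∃ k m : ℕ, 1 ≤ m ∧ ∀ n : ℕ, k ≤ n → p (n + m) = p n := by
    intro i j hij h
    refine ⟨i, j - i, by omega, fun n hn => ?_⟩
    have h2 := congrFun h (n - i)
    rw [show n - i + i = n by omega, show n - i + j = n + (j - i) by omega] at h2
    exact h2.symm
  rcases lt_or_gt_of_ne hne with hlt | hlt
  · exact key i j hlt heq
  · exact key j i hlt heq.symm
end

section
/- Let A be an invertible Mealy automaton over X. If finite words v and u of the same length are e-equivalent, then there exists an element g ∈ G_A such that g(v) = u and g acts trivially beyond v, i.e., g(vw) = uw for every finite word w. -/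
theorem Mealy.act_append_aux {S X : Type*} (A : Mealy S X) (v w : List X) :
    ∀ s : S, A.act s (v ++ w) = A.act s v ++ A.act (A.sec s v) w := by
  induction v with
  | nil => intro s; rfl
  | cons x v ih => intro s; simp [Mealy.act, Mealy.sec, ih]

theorem Mealy.act_bijective_aux {S X : Type*} (A : Mealy S X) (hInv : A.Invertible) (s : S) :
    Function.Bijective (A.act s) := by
  constructor
  · intro v
    induction v generalizing s with
    | nil =>
      intro u h
      cases u with
      | nil => rfl
      | cons y u => simp [Mealy.act] at h
    | cons x v ih =>
      intro u h
      cases u with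
      | nil => simp [Mealy.act] at h
      | cons y u =>
        simp only [Mealy.act, List.cons.injEq] at h
        obtain ⟨h1, h2⟩ := h
        have hxy : x = y := (hInv s).1 h1
        subst hxy
        rw [ih _ h2]
  · intro u
    induction u generalizing s with
    | nil => exact ⟨[], rfl⟩
    | cons y u ih =>
      obtain ⟨x, hx⟩ := (hInv s).2 y
      obtain ⟨v, hv⟩ := ih (A.step s x).2
      refine ⟨x :: v, ?_⟩
      simp only [Mealy.act, hv]
      exact congrArg (· :: u) hx

theorem Mealy.realize_aux {S X : Type*} (A : Mealy S X) (hInv : A.Invertible) (s : S)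
    (v u : List X) (ht : A.IsTrivialState (A.sec s v)) (hs : A.act s v = u) :
    ∃ g ∈ A.autGroup, ∀ w : List X, g (v ++ w) = u ++ w := by
  refine ⟨Equiv.ofBijective (A.act s) (A.act_bijective_aux hInv s),
    Subgroup.subset_closure ⟨s, fun _ => rfl⟩, fun w => ?_⟩
  rw [Equiv.ofBijective_apply, A.act_append_aux, hs, ht w]

theorem Mealy.realize_symm_aux {S X : Type*} (A : Mealy S X) (v u : List X)
    (h : ∃ g ∈ A.autGroup, ∀ w : List X, g (v ++ w) = u ++ w) :
    ∃ g ∈ A.autGroup, ∀ w : List X, g (u ++ w) = v ++ w := by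
  obtain ⟨g, hg, h⟩ := h
  exact ⟨g⁻¹, A.autGroup.inv_mem hg, fun w => by rw [← h w]; exact g.symm_apply_apply _⟩

/-- If `v` and `u` are `e`-equivalent, then some `g ∈ G_A` maps `v` to
`u` and acts trivially beyond `v`: `g(vw) = uw` for all `w`. -/
theorem eEquiv_realized_by_group_element {S X : Type*} [Fintype S] [Fintype X]
    (hX : 2 ≤ Fintype.card X) (A : Mealy S X) (hInv : A.Invertible)
    (v u : List X) (hlen : v.length = u.length) (h : A.EEquiv v u) :
    ∃ g ∈ A.autGroup, g v = u ∧ ∀ w : List X, g (v ++ w) = u ++ w := by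
  have key : ∃ g ∈ A.autGroup, ∀ w : List X, g (v ++ w) = u ++ w := by
    clear hlen
    induction h with
    | rel v u h =>
      obtain ⟨s, ⟨ht, hs⟩ | ⟨ht, hs⟩⟩ := h
      · exact A.realize_aux hInv s _ _ ht hs
      · exact A.realize_symm_aux _ _ (A.realize_aux hInv s _ _ ht hs)
    | refl v => exact ⟨1, A.autGroup.one_mem, fun w => rfl⟩
    | symm v u _ ih => exact A.realize_symm_aux _ _ ih
    | trans a b c _ _ ih1 ih2 =>
      obtain ⟨g, hg, h1⟩ := ih1
      obtain ⟨k, hk, h2⟩ := ih2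
      exact ⟨k * g, A.autGroup.mul_mem hk hg, fun w => by
        rw [Equiv.Perm.mul_apply, h1, h2]⟩
  obtain ⟨g, hg, h1⟩ := key
  exact ⟨g, hg, by simpa using h1 [], h1⟩
end
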